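/- Gaussian hypercontractivity corollary for halfspaces: let g, h be standard jointly Gaussian random variables with correlation 1−ε for ε ∈ (0,1). Then for every r ∈ ℝ, P[g ≤ r and h ≤ r] ≤ P[g ≤ r]^{2/(2−ε)}; equivalently P[h ≤ r | g ≤ r] ≤ P[g ≤ r]^{ε/(2−ε)} (and hence ≤ P[g ≤ r]^{ε/2}). -/

import Mathlib

open MeasureTheory

/-- density of the centered bivariate Gaussian with unit variances and correlation `ρ` -/
noncomputable def biGaussianDensity (ρ : ℝ) (p : ℝ × ℝ) : ℝ :=
  (1 / (2 * Real.pi * Real.sqrt (1 - ρ ^ 2))) *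
    Real.exp (-(p.1 ^ 2 - 2 * ρ * p.1 * p.2 + p.2 ^ 2) / (2 * (1 - ρ ^ 2)))

/-!
Put `α = √((1 - ρ) / (1 + ρ))`, so that `1 + α ^ 2 = 2 / (1 + ρ)`. Splitting the quadrant along the
diagonal shows that the maximum of the two coordinates has the skew-normal density `2 φ(x) Φ(α x)`,
so the claim is `W ≤ Φ ^ (1 + α ^ 2)` for the distribution function `W` of that density. The
difference `Φ ^ (1 + α ^ 2) - W` vanishes at `±∞`, and its derivative
`φ Φ ^ (α ^ 2) (1 + α ^ 2 - 2 Φ(α x) / Φ(x) ^ (α ^ 2))` changes sign at most once, from `+` to `-`,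
because `Φ(α x) / Φ(x) ^ (α ^ 2)` is increasing. In terms of the logarithmic derivative `h = φ / Φ`
of `Φ`, this monotonicity is `α h(x) ≤ h(α x)` for `α ≤ 1`: indeed `h(s x) / s` is decreasing in
`s > 0`, by the Mills ratio bound `-x φ(x) < (x ^ 2 + 1) Φ(x)`.
-/

open ProbabilityTheory Set Filter Topology
open scoped NNReal ENNReal

section RealFunctions

variable {f : ℝ → ℝ}

lemma pos_of_hasDerivAt_pos_of_tendsto_atBot {f' : ℝ → ℝ} (hf : ∀ x, HasDerivAt f (f' x) x)
    (hf' : ∀ x, 0 < f' x) (h0 : Tendsto f atBot (𝓝 0)) (x : ℝ) : 0 < f x := by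
  have hmono : StrictMono f := strictMono_of_hasDerivAt_pos hf hf'
  exact (hmono.monotone.le_of_tendsto h0 (x - 1)).trans_lt (hmono (by linarith))

lemma le_of_hasDerivAt_mul_sub_of_monotone {w q : ℝ → ℝ} {c l : ℝ}
    (hf : ∀ x, HasDerivAt f (w x * (c - q x)) x) (hw : ∀ x, 0 ≤ w x) (hq : Monotone q)
    (hbot : Tendsto f atBot (𝓝 l)) (htop : Tendsto f atTop (𝓝 l)) (x : ℝ) : l ≤ f x := by
  have hcont : Continuous f := continuous_iff_continuousAt.2 fun y => (hf y).continuousAt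
  rcases le_total (q x) c with hx | hx
  · have hmono : MonotoneOn f (Iic x) :=
      monotoneOn_of_hasDerivWithinAt_nonneg (convex_Iic x) hcont.continuousOn
        (fun y _ => (hf y).hasDerivWithinAt) fun y hy =>
          mul_nonneg (hw y) (sub_nonneg.2 ((hq (mem_Iic.1 (interior_subset hy))).trans hx))
    refine le_of_tendsto hbot ?_
    filter_upwards [Iic_mem_atBot x] with y hy using hmono hy self_mem_Iic hy
  · have hanti : AntitoneOn f (Ici x) :=
      antitoneOn_of_hasDerivWithinAt_nonpos (convex_Ici x) hcont.continuousOn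
        (fun y _ => (hf y).hasDerivWithinAt) fun y hy =>
          mul_nonpos_of_nonneg_of_nonpos (hw y)
            (sub_nonpos.2 (hx.trans (hq (mem_Ici.1 (interior_subset hy)))))
    refine le_of_tendsto htop ?_
    filter_upwards [Ici_mem_atTop x] with y hy using hanti self_mem_Ici hy hy

end RealFunctions

section IntegralIic

variable {E : Type*} [NormedAddCommGroup E] [NormedSpace ℝ E] {f : ℝ → E}

lemma hasDerivAt_integral_Iic [CompleteSpace E] (hf : Integrable f) (hc : Continuous f) (x : ℝ) :
    HasDerivAt (fun u => ∫ y in Iic u, f y) (f x) x := by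
  have h : (fun u => ∫ y in Iic u, f y) = fun u => (∫ y in Iic 0, f y) + ∫ y in 0..u, f y := by
    ext u
    rw [← intervalIntegral.integral_Iic_sub_Iic hf.integrableOn hf.integrableOn,
      add_sub_cancel]
  rw [h]
  exact (hc.integral_hasStrictDerivAt 0 x).hasDerivAt.const_add _

lemma tendsto_integral_Iic_atTop (hf : Integrable f) :
    Tendsto (fun u => ∫ y in Iic u, f y) atTop (𝓝 (∫ y, f y)) :=
  (aecover_Iic tendsto_id).integral_tendsto_of_countably_generated hf

end IntegralIic

section GaussianReal

variable {m : ℝ} {v : ℝ≥0}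

lemma hasDerivAt_gaussianPDFReal (x : ℝ) :
    HasDerivAt (gaussianPDFReal m v) (-((x - m) / v) * gaussianPDFReal m v x) x := by
  have h : HasDerivAt (fun y : ℝ => -(y - m) ^ 2 / (2 * v)) (-((x - m) / v)) x := by
    convert! (((hasDerivAt_id x).sub_const m).pow 2).neg.div_const (2 * (v : ℝ)) using 1
    simp only [id_eq]
    ring
  rw [gaussianPDFReal_def]
  convert! h.exp.const_mul (√(2 * Real.pi * v))⁻¹ using 1
  ring

lemma continuous_gaussianPDFReal : Continuous (gaussianPDFReal m v) :=
  continuous_iff_continuousAt.2 fun x => (hasDerivAt_gaussianPDFReal x).continuousAt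

lemma tendsto_gaussianPDFReal_atBot (hv : v ≠ 0) :
    Tendsto (gaussianPDFReal m v) atBot (𝓝 0) := by
  have hv0 : (0 : ℝ) < 2 * v := by positivity
  have hshift : Tendsto (fun x : ℝ => x - m) atBot atBot :=
    tendsto_atBot_add_const_right _ (-m) tendsto_id
  have hsq : Tendsto (fun x : ℝ => (x - m) ^ 2) atBot atTop := by
    simpa only [sq] using hshift.atBot_mul_atBot₀ hshift
  have hexp := Real.tendsto_exp_atBot.comp
    ((tendsto_neg_atTop_atBot.comp hsq).atBot_div_const hv0)
  simpa [gaussianPDFReal_def] using hexp.const_mul (√(2 * Real.pi * v))⁻¹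

lemma lintegral_gaussianReal (hv : v ≠ 0) (f : ℝ → ℝ≥0∞) :
    ∫⁻ x, f x ∂gaussianReal m v = ∫⁻ x, gaussianPDF m v x * f x := by
  rw [gaussianReal_of_var_ne_zero m hv]
  exact lintegral_withDensity_eq_lintegral_mul_non_measurable _ (measurable_gaussianPDF m v)
    (ae_of_all _ fun _ => gaussianPDF_lt_top) f

lemma cdf_gaussianReal_eq_integral (hv : v ≠ 0) (x : ℝ) :
    cdf (gaussianReal m v) x = ∫ y in Iic x, gaussianPDFReal m v y := by
  rw [cdf_eq_real, measureReal_def, gaussianReal_apply_eq_integral m hv,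
    ENNReal.toReal_ofReal (integral_nonneg fun y => gaussianPDFReal_nonneg m v y)]

lemma hasDerivAt_cdf_gaussianReal (hv : v ≠ 0) (x : ℝ) :
    HasDerivAt (cdf (gaussianReal m v)) (gaussianPDFReal m v x) x :=
  (hasDerivAt_integral_Iic (integrable_gaussianPDFReal m v) continuous_gaussianPDFReal
    x).congr_of_eventuallyEq (.of_forall (cdf_gaussianReal_eq_integral hv))

lemma continuous_cdf_gaussianReal (hv : v ≠ 0) : Continuous (cdf (gaussianReal m v)) :=
  continuous_iff_continuousAt.2 fun x => (hasDerivAt_cdf_gaussianReal hv x).continuousAt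

lemma cdf_gaussianReal_pos (hv : v ≠ 0) (x : ℝ) : 0 < cdf (gaussianReal m v) x :=
  pos_of_hasDerivAt_pos_of_tendsto_atBot (hasDerivAt_cdf_gaussianReal hv)
    (fun y => gaussianPDFReal_pos m v y hv) (tendsto_cdf_atBot _) x

lemma cdf_gaussianReal_eq_cdf_standard (hv : v ≠ 0) (x : ℝ) :
    cdf (gaussianReal m v) x = cdf (gaussianReal 0 1) ((x - m) / √v) := by
  have hstd : (gaussianReal m v).map (fun y => (y - m) / √v) = gaussianReal 0 1 := by
    rw [show (fun y => (y - m) / √v) = (· / √(v : ℝ)) ∘ (· - m) from rfl,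
      ← Measure.map_map (by fun_prop) (by fun_prop), gaussianReal_map_sub_const,
      gaussianReal_map_div_const, sub_self, zero_div]
    congr 1
    ext
    simp [hv]
  have hσ : 0 < √(v : ℝ) := by positivity
  rw [cdf_eq_real, cdf_eq_real, ← hstd, map_measureReal_apply (by fun_prop) measurableSet_Iic]
  congr 1
  ext y
  simp [div_le_div_iff_of_pos_right hσ]

lemma cdf_gaussianReal_neg (hv : v ≠ 0) (x : ℝ) :
    cdf (gaussianReal 0 v) (-x) = 1 - cdf (gaussianReal 0 v) x := by
  have := nullSingletonClass_gaussianReal (μ := 0) hv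
  have hneg : (gaussianReal 0 v).map (fun y => -y) = gaussianReal 0 v := by
    rw [gaussianReal_map_neg, neg_zero]
  rw [cdf_eq_real, cdf_eq_real, ← probReal_compl_eq_one_sub measurableSet_Iic, compl_Iic]
  conv_lhs => rw [← hneg]
  rw [map_measureReal_apply measurable_neg measurableSet_Iic, neg_preimage, neg_Iic, neg_neg]
  exact measureReal_congr Ioi_ae_eq_Ici.symm

end GaussianReal

local notation "φ" => gaussianPDFReal 0 1

local notation "Φ" => cdf (gaussianReal 0 1)

lemma neg_mul_gaussianPDFReal_lt_mul_cdf (x : ℝ) : -x * φ x < (x ^ 2 + 1) * Φ x := by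
  have hpos : 0 < Φ x + x / (x ^ 2 + 1) * φ x := by
    refine pos_of_hasDerivAt_pos_of_tendsto_atBot
      (f := fun x => Φ x + x / (x ^ 2 + 1) * φ x)
      (f' := fun x => 2 / (x ^ 2 + 1) ^ 2 * φ x) (fun x => ?_) (fun x => ?_) ?_ x
    · have h0 : x ^ 2 + 1 ≠ 0 := by positivity
      convert! (hasDerivAt_cdf_gaussianReal one_ne_zero x).add (((hasDerivAt_id x).div
        ((hasDerivAt_pow 2 x).add_const 1) h0).mul (hasDerivAt_gaussianPDFReal x)) using 1
      simp only [one_mul, id_eq, Nat.cast_ofNat, Nat.add_one_sub_one, pow_one, Pi.div_apply,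
        sub_zero, NNReal.coe_one, div_one, neg_mul, mul_neg]
      field_simp
      ring
    · have := gaussianPDFReal_pos 0 1 x one_ne_zero
      positivity
    · have hdecay : Tendsto (fun x : ℝ => x / (x ^ 2 + 1) * φ x) atBot (𝓝 0) := by
        refine squeeze_zero_norm (a := φ) (fun x => ?_) (tendsto_gaussianPDFReal_atBot one_ne_zero)
        rw [norm_mul, Real.norm_of_nonneg (gaussianPDFReal_nonneg 0 1 x)]
        refine mul_le_of_le_one_left (gaussianPDFReal_nonneg 0 1 x) ?_
        rw [norm_div, Real.norm_eq_abs, Real.norm_of_nonneg (by positivity),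
          div_le_one (by positivity)]
        nlinarith [sq_abs x, sq_nonneg (|x| - 1)]
      simpa using (tendsto_cdf_atBot _).add hdecay
  have hscaled : 0 < (x ^ 2 + 1) * (Φ x + x / (x ^ 2 + 1) * φ x) := by positivity
  have hexpand : (x ^ 2 + 1) * (Φ x + x / (x ^ 2 + 1) * φ x) = (x ^ 2 + 1) * Φ x + x * φ x := by
    field_simp
  linarith

/-- The inverse Mills ratio `φ / Φ` of the lower tail of the standard Gaussian, that is, the
logarithmic derivative of its distribution function. -/
noncomputable def inverseMillsRatio (x : ℝ) : ℝ := φ x / Φ x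

lemma inverseMillsRatio_pos (x : ℝ) : 0 < inverseMillsRatio x :=
  div_pos (gaussianPDFReal_pos 0 1 x one_ne_zero) (cdf_gaussianReal_pos one_ne_zero x)

lemma hasDerivAt_log_cdf_gaussianReal (x : ℝ) :
    HasDerivAt (fun y => Real.log (Φ y)) (inverseMillsRatio x) x :=
  (hasDerivAt_cdf_gaussianReal one_ne_zero x).log (cdf_gaussianReal_pos one_ne_zero x).ne'

lemma hasDerivAt_inverseMillsRatio (x : ℝ) :
    HasDerivAt inverseMillsRatio (-inverseMillsRatio x * (x + inverseMillsRatio x)) x := by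
  have hΦ : Φ x ≠ 0 := (cdf_gaussianReal_pos one_ne_zero x).ne'
  convert! (hasDerivAt_gaussianPDFReal x).div (hasDerivAt_cdf_gaussianReal one_ne_zero x) hΦ using 1
  simp only [inverseMillsRatio, sub_zero, NNReal.coe_one, div_one]
  field_simp
  ring

lemma one_add_mul_add_inverseMillsRatio_pos (x : ℝ) : 0 < 1 + x * (x + inverseMillsRatio x) := by
  have hΦ := cdf_gaussianReal_pos (m := 0) one_ne_zero x
  have heq : 1 + x * (x + inverseMillsRatio x) = ((x ^ 2 + 1) * Φ x - -x * φ x) / Φ x := by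
    rw [inverseMillsRatio]
    field_simp
    ring
  rw [heq]
  exact div_pos (sub_pos.2 (neg_mul_gaussianPDFReal_lt_mul_cdf x)) hΦ

lemma antitoneOn_inverseMillsRatio_mul_div (x : ℝ) :
    AntitoneOn (fun s => inverseMillsRatio (s * x) / s) (Ioi 0) := by
  have hderiv (s : ℝ) (hs : 0 < s) : HasDerivAt (fun s => inverseMillsRatio (s * x) / s)
      (-(inverseMillsRatio (s * x) * (1 + s * x * (s * x + inverseMillsRatio (s * x))) / s ^ 2))
      s := by
    convert! (((hasDerivAt_inverseMillsRatio (s * x)).comp s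
      (hasDerivAt_mul_const x)).div (hasDerivAt_id s) hs.ne') using 1
    simp only [Function.comp_apply, id_eq]
    ring
  refine antitoneOn_of_hasDerivWithinAt_nonpos (convex_Ioi 0)
    (fun s hs => (hderiv s hs).continuousAt.continuousWithinAt)
    (fun s hs => (hderiv s (interior_subset hs)).hasDerivWithinAt) fun s _ => ?_
  have hpos := inverseMillsRatio_pos (s * x)
  have hmills := one_add_mul_add_inverseMillsRatio_pos (s * x)
  exact neg_nonpos.2 (by positivity)

section SkewNormal

variable {α : ℝ}

lemma mul_inverseMillsRatio_le (hα : α ∈ Icc 0 1) (x : ℝ) :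
    α * inverseMillsRatio x ≤ inverseMillsRatio (α * x) := by
  rcases hα.1.eq_or_lt with rfl | hα0
  · simpa using (inverseMillsRatio_pos 0).le
  have h := antitoneOn_inverseMillsRatio_mul_div x hα0 (mem_Ioi.2 zero_lt_one) hα.2
  simp only [one_mul, div_one] at h
  rwa [le_div_iff₀ hα0, mul_comm] at h

lemma monotone_log_cdf_mul_sub_sq_mul_log_cdf (hα : α ∈ Icc 0 1) :
    Monotone fun x => Real.log (Φ (α * x)) - α ^ 2 * Real.log (Φ x) := by
  refine monotone_of_hasDerivAt_nonneg
    (f' := fun x => α * (inverseMillsRatio (α * x) - α * inverseMillsRatio x)) (fun x => ?_)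
    fun x => mul_nonneg hα.1 (sub_nonneg.2 (mul_inverseMillsRatio_le hα x))
  convert! ((hasDerivAt_log_cdf_gaussianReal (α * x)).comp x (hasDerivAt_const_mul α)).sub
    ((hasDerivAt_log_cdf_gaussianReal x).const_mul (α ^ 2)) using 1
  ring

/-- The density of the skew-normal distribution with shape parameter `α`. -/
noncomputable def skewNormalPDFReal (α x : ℝ) : ℝ := 2 * φ x * Φ (α * x)

lemma skewNormalPDFReal_nonneg (α x : ℝ) : 0 ≤ skewNormalPDFReal α x :=
  mul_nonneg (mul_nonneg zero_le_two (gaussianPDFReal_nonneg 0 1 x)) (cdf_nonneg _ _)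

lemma continuous_skewNormalPDFReal : Continuous (skewNormalPDFReal α) := by
  have hφ : Continuous φ := continuous_gaussianPDFReal
  have hΦ : Continuous Φ := continuous_cdf_gaussianReal one_ne_zero
  unfold skewNormalPDFReal
  fun_prop

lemma integrable_skewNormalPDFReal : Integrable (skewNormalPDFReal α) := by
  have hΦ : Continuous Φ := continuous_cdf_gaussianReal one_ne_zero
  refine ((integrable_gaussianPDFReal 0 1).const_mul 2).mul_bdd (c := 1)
    (hΦ.comp (continuous_const_mul α)).aestronglyMeasurable (ae_of_all _ fun x => ?_)
  rw [Real.norm_of_nonneg (cdf_nonneg _ _)]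
  exact cdf_le_one _ _

lemma skewNormalPDFReal_add_neg (α x : ℝ) :
    skewNormalPDFReal α x + skewNormalPDFReal α (-x) = 2 * φ x := by
  have hφ : φ (-x) = φ x := by simp [gaussianPDFReal_def]
  rw [skewNormalPDFReal, skewNormalPDFReal, hφ, mul_neg, cdf_gaussianReal_neg one_ne_zero]
  ring

lemma integral_skewNormalPDFReal_eq_one (α : ℝ) : ∫ x, skewNormalPDFReal α x = 1 := by
  have h : (∫ x, skewNormalPDFReal α x) + ∫ x, skewNormalPDFReal α x = 2 := calc
    _ = (∫ x, skewNormalPDFReal α x) + ∫ x, skewNormalPDFReal α (-x) := by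
      rw [integral_neg_eq_self (skewNormalPDFReal α)]
    _ = ∫ x, 2 * φ x := by
      rw [← integral_add integrable_skewNormalPDFReal integrable_skewNormalPDFReal.comp_neg]
      simp_rw [skewNormalPDFReal_add_neg]
    _ = 2 := by
      rw [integral_const_mul, integral_gaussianPDFReal_eq_one 0 one_ne_zero, mul_one]
  linarith

/-- The distribution function of the skew-normal distribution with shape parameter `α`. -/
noncomputable def skewNormalCDF (α r : ℝ) : ℝ := ∫ x in Iic r, skewNormalPDFReal α x

lemma skewNormalCDF_nonneg (α r : ℝ) : 0 ≤ skewNormalCDF α r :=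
  integral_nonneg fun x => skewNormalPDFReal_nonneg α x

lemma hasDerivAt_skewNormalCDF (r : ℝ) :
    HasDerivAt (skewNormalCDF α) (skewNormalPDFReal α r) r :=
  hasDerivAt_integral_Iic integrable_skewNormalPDFReal continuous_skewNormalPDFReal r

lemma tendsto_skewNormalCDF_atBot : Tendsto (skewNormalCDF α) atBot (𝓝 0) :=
  tendsto_integral_Iic_zero tendsto_id

lemma tendsto_skewNormalCDF_atTop : Tendsto (skewNormalCDF α) atTop (𝓝 1) :=
  integral_skewNormalPDFReal_eq_one α ▸ tendsto_integral_Iic_atTop integrable_skewNormalPDFReal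

lemma skewNormalCDF_le_cdf_rpow (hα : α ∈ Icc 0 1) (r : ℝ) :
    skewNormalCDF α r ≤ Φ r ^ (1 + α ^ 2) := by
  have hexp : 0 < 1 + α ^ 2 := by positivity
  have hlim {l : Filter ℝ} {a : ℝ} (hΦ : Tendsto Φ l (𝓝 a))
      (hW : Tendsto (skewNormalCDF α) l (𝓝 a)) (ha : a ^ (1 + α ^ 2) = a) :
      Tendsto (fun x => Φ x ^ (1 + α ^ 2) - skewNormalCDF α x) l (𝓝 0) := by
    simpa [ha] using (hΦ.rpow_const (.inr hexp.le)).sub hW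
  refine sub_nonneg.1 <| le_of_hasDerivAt_mul_sub_of_monotone
    (f := fun x => Φ x ^ (1 + α ^ 2) - skewNormalCDF α x)
    (w := fun x => φ x * Φ x ^ α ^ 2)
    (q := fun x => 2 * Real.exp (Real.log (Φ (α * x)) - α ^ 2 * Real.log (Φ x)))
    (c := 1 + α ^ 2) (fun x => ?_)
    (fun x => mul_nonneg (gaussianPDFReal_nonneg 0 1 x) (Real.rpow_nonneg (cdf_nonneg _ x) _))
    ((Real.exp_monotone.comp (monotone_log_cdf_mul_sub_sq_mul_log_cdf hα)).const_mul zero_le_two)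
    (hlim (tendsto_cdf_atBot _) tendsto_skewNormalCDF_atBot (Real.zero_rpow hexp.ne'))
    (hlim (tendsto_cdf_atTop _) tendsto_skewNormalCDF_atTop (Real.one_rpow _)) r
  have hΦ (y : ℝ) : 0 < Φ y := cdf_gaussianReal_pos one_ne_zero y
  have hratio : Φ x ^ α ^ 2 * Real.exp (Real.log (Φ (α * x)) - α ^ 2 * Real.log (Φ x)) =
      Φ (α * x) := by
    rw [Real.rpow_def_of_pos (hΦ x), ← Real.exp_add, mul_comm (Real.log _), add_sub_cancel,
      Real.exp_log (hΦ _)]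
  convert! ((hasDerivAt_cdf_gaussianReal one_ne_zero x).rpow_const (p := 1 + α ^ 2)
    (.inl (hΦ x).ne')).sub (hasDerivAt_skewNormalCDF x) using 1
  rw [skewNormalPDFReal, add_sub_cancel_left]
  linear_combination -2 * φ x * hratio

end SkewNormal

section Quadrant

variable {α : Type*} [LinearOrder α] [TopologicalSpace α] [OrderClosedTopology α]
  [SecondCountableTopology α] [MeasurableSpace α] [OpensMeasurableSpace α]

lemma measurableSet_wedge (r : α) :
    MeasurableSet {p : α × α | p.1 ≤ r ∧ p.2 ≤ p.1} :=
  (measurableSet_le measurable_fst measurable_const).inter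
    (measurableSet_le measurable_snd measurable_fst)

lemma measure_quadrant_le_two_mul_measure_wedge {μ : Measure (α × α)}
    (hμ : MeasurePreserving Prod.swap μ μ) (r : α) :
    μ {p | p.1 ≤ r ∧ p.2 ≤ r} ≤ 2 * μ {p | p.1 ≤ r ∧ p.2 ≤ p.1} := by
  calc μ {p | p.1 ≤ r ∧ p.2 ≤ r}
      ≤ μ ({p | p.1 ≤ r ∧ p.2 ≤ p.1} ∪ Prod.swap ⁻¹' {p | p.1 ≤ r ∧ p.2 ≤ p.1}) := by
        refine measure_mono fun p hp => ?_
        exact (le_total p.2 p.1).imp (⟨hp.1, ·⟩) (⟨hp.2, ·⟩)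
    _ ≤ μ {p | p.1 ≤ r ∧ p.2 ≤ p.1} + μ (Prod.swap ⁻¹' {p | p.1 ≤ r ∧ p.2 ≤ p.1}) :=
        measure_union_le _ _
    _ = 2 * μ {p | p.1 ≤ r ∧ p.2 ≤ p.1} := by
        rw [hμ.measure_preimage (measurableSet_wedge r).nullMeasurableSet, two_mul]

end Quadrant

section BiGaussian

/-- The centered bivariate Gaussian measure with unit variances and correlation `ρ`. -/
noncomputable def biGaussian (ρ : ℝ) : Measure (ℝ × ℝ) :=
  volume.withDensity fun p => ENNReal.ofReal (biGaussianDensity ρ p)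

variable {ρ : ℝ}

lemma measurable_biGaussianDensity : Measurable (biGaussianDensity ρ) := by
  unfold biGaussianDensity
  fun_prop

lemma biGaussianDensity_swap (ρ : ℝ) (p : ℝ × ℝ) :
    biGaussianDensity ρ p.swap = biGaussianDensity ρ p := by
  simp only [biGaussianDensity, Prod.fst_swap, Prod.snd_swap]
  ring_nf

lemma measurePreserving_swap_biGaussian :
    MeasurePreserving Prod.swap (biGaussian ρ) (biGaussian ρ) := by
  refine ⟨measurable_swap, Measure.ext fun s hs => ?_⟩
  have hswap : MeasurePreserving Prod.swap (volume : Measure (ℝ × ℝ)) volume :=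
    Measure.measurePreserving_swap
  rw [Measure.map_apply measurable_swap hs, biGaussian, withDensity_apply _ hs,
    withDensity_apply _ (measurable_swap hs), ← hswap.setLIntegral_comp_preimage_emb
      MeasurableEquiv.prodComm.measurableEmbedding _ s]
  simp_rw [biGaussianDensity_swap]

lemma biGaussianDensity_eq_mul_gaussianPDFReal (hρ : ρ ^ 2 < 1) (x y : ℝ) :
    biGaussianDensity ρ (x, y) = φ x * gaussianPDFReal (ρ * x) (1 - ρ ^ 2).toNNReal y := by
  have hv : 0 < 1 - ρ ^ 2 := by linarith
  have hnorm : √(2 * Real.pi) * √(2 * Real.pi * (1 - ρ ^ 2)) = 2 * Real.pi * √(1 - ρ ^ 2) := by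
    rw [Real.sqrt_mul (by positivity) (1 - ρ ^ 2), ← mul_assoc,
      Real.mul_self_sqrt (by positivity)]
  have hsquare : -(x ^ 2 - 2 * ρ * x * y + y ^ 2) / (2 * (1 - ρ ^ 2)) =
      -x ^ 2 / 2 + -(y - ρ * x) ^ 2 / (2 * (1 - ρ ^ 2)) := by
    field_simp
    ring
  simp only [biGaussianDensity, gaussianPDFReal, Real.coe_toNNReal _ hv.le, NNReal.coe_one,
    mul_one, sub_zero]
  rw [hsquare, Real.exp_add, ← hnorm, one_div, mul_inv]
  ring

lemma biGaussian_apply (hρ : ρ ^ 2 < 1) {s : Set (ℝ × ℝ)} (hs : MeasurableSet s) :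
    biGaussian ρ s =
      ∫⁻ x, gaussianReal (ρ * x) (1 - ρ ^ 2).toNNReal (Prod.mk x ⁻¹' s) ∂gaussianReal 0 1 := by
  have hv : (1 - ρ ^ 2).toNNReal ≠ 0 := by simpa using hρ
  have hdensity : Measurable fun p => ENNReal.ofReal (biGaussianDensity ρ p) :=
    measurable_biGaussianDensity.ennreal_ofReal
  rw [biGaussian, withDensity_apply _ hs, ← lintegral_indicator hs, Measure.volume_eq_prod,
    lintegral_prod _ (hdensity.indicator hs).aemeasurable, lintegral_gaussianReal one_ne_zero]
  refine lintegral_congr fun x => ?_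
  rw [gaussianReal_apply _ hv, ← lintegral_const_mul _ (measurable_gaussianPDF _ _),
    ← lintegral_indicator (measurable_prodMk_left hs)]
  refine lintegral_congr fun y => ?_
  by_cases hy : (x, y) ∈ s
  · rw [indicator_of_mem hy, indicator_of_mem (by exact hy),
      biGaussianDensity_eq_mul_gaussianPDFReal hρ,
      ENNReal.ofReal_mul (gaussianPDFReal_nonneg 0 1 x), gaussianPDF, gaussianPDF]
  · rw [indicator_of_notMem hy, indicator_of_notMem (by exact hy)]

lemma biGaussian_halfPlane_eq_cdf (hρ : ρ ^ 2 < 1) (r : ℝ) :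
    biGaussian ρ {p | p.1 ≤ r} = ENNReal.ofReal (Φ r) := by
  rw [biGaussian_apply hρ (measurableSet_le measurable_fst measurable_const), ofReal_cdf,
    ← lintegral_indicator_one measurableSet_Iic]
  refine lintegral_congr fun x => ?_
  by_cases hx : x ≤ r <;> simp [hx]

lemma two_mul_biGaussian_wedge_eq_skewNormalCDF (hρ : ρ ^ 2 < 1) (r : ℝ) :
    2 * biGaussian ρ {p | p.1 ≤ r ∧ p.2 ≤ p.1} =
      ENNReal.ofReal (skewNormalCDF ((1 - ρ) / √(1 - ρ ^ 2)) r) := by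
  have hv : (1 - ρ ^ 2).toNNReal ≠ 0 := by simpa using hρ
  rw [biGaussian_apply hρ (measurableSet_wedge r), skewNormalCDF,
    ofReal_integral_eq_lintegral_ofReal integrable_skewNormalPDFReal.integrableOn
      (ae_of_all _ (skewNormalPDFReal_nonneg _)),
    lintegral_gaussianReal one_ne_zero, ← lintegral_indicator measurableSet_Iic,
    ← lintegral_const_mul' _ _ ENNReal.ofNat_ne_top]
  refine lintegral_congr fun x => ?_
  by_cases hx : x ≤ r
  · have hset : Prod.mk x ⁻¹' {p : ℝ × ℝ | p.1 ≤ r ∧ p.2 ≤ p.1} = Iic x := by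
      ext y
      simp [hx]
    have hcond : gaussianReal (ρ * x) (1 - ρ ^ 2).toNNReal (Iic x) =
        ENNReal.ofReal (Φ ((1 - ρ) / √(1 - ρ ^ 2) * x)) := by
      rw [← ofReal_cdf, cdf_gaussianReal_eq_cdf_standard hv,
        Real.coe_toNNReal _ (by linarith : 0 ≤ 1 - ρ ^ 2)]
      congr 2
      ring
    rw [hset, hcond, indicator_of_mem (by exact hx), skewNormalPDFReal, gaussianPDF,
      ENNReal.ofReal_mul (mul_nonneg zero_le_two (gaussianPDFReal_nonneg 0 1 x)),
      ENNReal.ofReal_mul zero_le_two, ENNReal.ofReal_ofNat, mul_assoc]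
  · simp [hx]

theorem toReal_biGaussian_quadrant_le_rpow (hρ : ρ ∈ Ico 0 1) (r : ℝ) :
    (biGaussian ρ {p | p.1 ≤ r ∧ p.2 ≤ r}).toReal ≤
      (biGaussian ρ {p | p.1 ≤ r}).toReal ^ (2 / (1 + ρ)) := by
  obtain ⟨h0, h1⟩ := hρ
  have hρ2 : ρ ^ 2 < 1 := by nlinarith
  set α := (1 - ρ) / √(1 - ρ ^ 2) with hα
  have hα2 : α ^ 2 = (1 - ρ) / (1 + ρ) := by
    rw [hα, div_pow, Real.sq_sqrt (by linarith), div_eq_div_iff (by linarith) (by linarith)]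
    ring
  have hα01 : α ∈ Icc 0 1 := by
    have hα0 : 0 ≤ α := div_nonneg (by linarith) (Real.sqrt_nonneg _)
    refine ⟨hα0, (sq_le_one_iff₀ hα0).1 ?_⟩
    rw [hα2, div_le_one (by linarith)]
    linarith
  have hexp : 1 + α ^ 2 = 2 / (1 + ρ) := by
    rw [hα2]
    field_simp
    ring
  have hquadrant : biGaussian ρ {p | p.1 ≤ r ∧ p.2 ≤ r} ≤ ENNReal.ofReal (skewNormalCDF α r) :=
    (measure_quadrant_le_two_mul_measure_wedge measurePreserving_swap_biGaussian r).trans_eq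
      (two_mul_biGaussian_wedge_eq_skewNormalCDF hρ2 r)
  rw [biGaussian_halfPlane_eq_cdf hρ2, ENNReal.toReal_ofReal (cdf_nonneg _ r), ← hexp]
  exact (ENNReal.toReal_le_of_le_ofReal (skewNormalCDF_nonneg α r) hquadrant).trans
    (skewNormalCDF_le_cdf_rpow hα01 r)

end BiGaussian

theorem gaussian_halfspace_hypercontractivity (ε : ℝ) (hε : ε ∈ Set.Ioo (0 : ℝ) 1)
    (r : ℝ) (μ : Measure (ℝ × ℝ))
    (hμ : μ = volume.withDensity (fun p => ENNReal.ofReal (biGaussianDensity (1 - ε) p))) :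
    (μ {p | p.1 ≤ r ∧ p.2 ≤ r}).toReal ≤
        (μ {p | p.1 ≤ r}).toReal ^ (2 / (2 - ε)) ∧
      (μ {p | p.1 ≤ r ∧ p.2 ≤ r}).toReal ≤
        (μ {p | p.1 ≤ r}).toReal ^ (1 + ε / 2) := by
  obtain ⟨h0, h1⟩ := hε
  replace hμ : μ = biGaussian (1 - ε) := hμ
  have hmain : (μ {p | p.1 ≤ r ∧ p.2 ≤ r}).toReal ≤ (μ {p | p.1 ≤ r}).toReal ^ (2 / (2 - ε)) := by
    have h := toReal_biGaussian_quadrant_le_rpow (ρ := 1 - ε) ⟨by linarith, by linarith⟩ r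
    rwa [← hμ, show 1 + (1 - ε) = 2 - ε by ring] at h
  have hmarginal : (μ {p | p.1 ≤ r}).toReal = Φ r := by
    rw [hμ, biGaussian_halfPlane_eq_cdf (by nlinarith), ENNReal.toReal_ofReal (cdf_nonneg _ r)]
  have hexponent : 1 + ε / 2 ≤ 2 / (2 - ε) := by
    rw [le_div_iff₀ (by linarith)]
    nlinarith [sq_nonneg ε]
  refine ⟨hmain, hmain.trans ?_⟩
  rw [hmarginal]
  exact Real.rpow_le_rpow_of_exponent_ge (cdf_gaussianReal_pos one_ne_zero r) (cdf_le_one _ r)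
    hexponent
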